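/- arXiv:2601.02853 — 2 statements merged into one kernel-verified Lean document; each statement's English description precedes it below -/
import Mathlib

section
/- For μ > 1 set r_μ = √(2(μ−1)), and for λ > 0 define h_λ(s) = e^{−s²/4} s^λ and H_λ(s) = h_λ(s−2) + h_λ(s+2). Then for every λ > λ₀ := (28 + 11√7)/9 and every t with 0 ≤ t < r_{λ+4} − r_{λ+3}, one has (2 r_{λ+4} − t) H_λ(r_{λ+4} − t) < 2λ (2 r_{λ+2} + t) H_{λ−2}(r_{λ+2} + t). -/
open Real

/-!
Write `H_l(x) = 2 E_l(x) cosh φ_l(x)`, where `φ_l` is half the logarithm of the quotient of the two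
summands `h_l(x - 2)` and `h_l(x + 2)`. The bound `log y ≤ (y - y⁻¹) / 2` bounds `φ_l` from below
well enough to make `H_l` increasing for `2l + 4 ≤ x² ≤ 2l + 8`. Both `r_{λ+4} - t` (with `l = λ`)
and `r_{λ+2} + t` (with `l = λ - 2`) lie in this range, so the left side is largest and the right
side is smallest at `t = 0`. At `t = 0` the exponential and power factors are explicit, and the two
hyperbolic cosines compare because `x ↦ φ_{x²/2 - 3}(x)` is decreasing, and this function takes the
values `φ_λ(r_{λ+4})` at `r_{λ+4}` and `φ_{λ-2}(r_{λ+2})` at `r_{λ+2}`.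
-/

section LogBounds

variable {c x : ℝ}

theorem log_add_sub_log_sub_le (hc : 0 ≤ c) (hx : c < x) :
    log (x + c) - log (x - c) ≤ 2 * c * x / (x ^ 2 - c ^ 2) := by
  have hsub : 0 < x - c := sub_pos.2 hx
  have hadd : 0 < x + c := by linarith
  have hlog : 0 ≤ log ((x + c) / (x - c)) :=
    log_nonneg ((one_le_div hsub).2 (by linarith))
  calc log (x + c) - log (x - c)
      = log ((x + c) / (x - c)) := (log_div hadd.ne' hsub.ne').symm
    _ ≤ sinh (log ((x + c) / (x - c))) := self_le_sinh_iff.2 hlog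
    _ = 2 * c * x / (x ^ 2 - c ^ 2) := by
      rw [sinh_log (div_pos hadd hsub), sq_sub_sq]
      field_simp
      ring

theorem le_log_add_sub_log_sub (hc : 0 ≤ c) (hx : c < x) :
    2 * c / x ≤ log (x + c) - log (x - c) := by
  have hsub : 0 < x - c := sub_pos.2 hx
  have hadd : 0 < x + c := by linarith
  have hx0 : 0 < x := hc.trans_lt hx
  have hquot : 1 + 2 * c / (x - c) = (x + c) / (x - c) := by
    field_simp
    ring
  have hpade := le_log_one_add_of_nonneg (show 0 ≤ 2 * c / (x - c) by positivity)
  rw [hquot, log_div hadd.ne' hsub.ne'] at hpade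
  refine le_of_eq_of_le ?_ hpade
  field_simp
  ring

end LogBounds

theorem mul_mul_cosh_le_mul_sinh {y z r q : ℝ} (hy : 0 ≤ y) (hyz : y ≤ z) (hq : 0 ≤ q)
    (hr : r ^ 2 * (1 + y ^ 2) ≤ q ^ 2) : y * r * cosh z ≤ q * sinh z := by
  have hsinh : y ≤ sinh z := hyz.trans (self_le_sinh_iff.2 (hy.trans hyz))
  have hsinh_sq : y ^ 2 ≤ sinh z ^ 2 := pow_le_pow_left₀ hy hsinh 2
  refine le_of_sq_le_sq ?_ (mul_nonneg hq (hy.trans hsinh))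
  calc (y * r * cosh z) ^ 2
      = r ^ 2 * (y ^ 2 + y ^ 2 * sinh z ^ 2) := by rw [mul_pow, cosh_sq]; ring
    _ ≤ r ^ 2 * (sinh z ^ 2 + y ^ 2 * sinh z ^ 2) := by gcongr
    _ = r ^ 2 * (1 + y ^ 2) * sinh z ^ 2 := by ring
    _ ≤ q ^ 2 * sinh z ^ 2 := by gcongr
    _ = (q * sinh z) ^ 2 := (mul_pow _ _ _).symm

theorem sqrt_add_sqrt_le_two_mul_sqrt_midpoint {u v : ℝ} (hu : 0 ≤ u) (hv : 0 ≤ v) :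
    √u + √v ≤ 2 * √((u + v) / 2) := by
  refine le_of_sq_le_sq ?_ (by positivity)
  calc (√u + √v) ^ 2 ≤ 2 * (√u ^ 2 + √v ^ 2) := add_sq_le
    _ = (2 * √((u + v) / 2)) ^ 2 := by
      rw [mul_pow, sq_sqrt hu, sq_sqrt hv, sq_sqrt (by linarith)]
      ring

/-- The function `h_l` of the statement. -/
noncomputable def bump (l s : ℝ) : ℝ := exp (-s ^ 2 / 4) * s ^ l

/-- The function `H_l` of the statement. -/
noncomputable def bumpPair (l s : ℝ) : ℝ := bump l (s - 2) + bump l (s + 2)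

/-- The geometric mean of the two summands of `bumpPair l x`. -/
noncomputable def envelope (l x : ℝ) : ℝ := exp (-1 - x ^ 2 / 4) * (x ^ 2 - 4) ^ (l / 2)

/-- Half the logarithm of the quotient of the two summands of `bumpPair l x`. -/
noncomputable def phase (l x : ℝ) : ℝ := x - l / 2 * (log (x + 2) - log (x - 2))

section Factorization

variable {l x : ℝ}

theorem envelope_pos (hx : 2 < x) : 0 < envelope l x :=
  mul_pos (exp_pos _) (rpow_pos_of_pos (by nlinarith) _)

theorem envelope_eq_exp (hx : 2 < x) :
    envelope l x = exp (-1 - x ^ 2 / 4 + l / 2 * (log (x + 2) + log (x - 2))) := by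
  have hsub : 0 < x - 2 := sub_pos.2 hx
  have hadd : 0 < x + 2 := by linarith
  rw [envelope, show x ^ 2 - 4 = (x + 2) * (x - 2) by ring, rpow_def_of_pos (mul_pos hadd hsub),
    log_mul hadd.ne' hsub.ne', ← exp_add, mul_comm (l / 2)]

theorem bump_sub_two (hx : 2 < x) : bump l (x - 2) = envelope l x * exp (phase l x) := by
  rw [envelope_eq_exp hx, bump, rpow_def_of_pos (sub_pos.2 hx), ← exp_add, ← exp_add, phase]
  ring_nf

theorem bump_add_two (hx : 2 < x) : bump l (x + 2) = envelope l x * exp (-phase l x) := by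
  rw [envelope_eq_exp hx, bump, rpow_def_of_pos (by linarith), ← exp_add, ← exp_add, phase]
  ring_nf

theorem bumpPair_eq_envelope_mul_cosh (hx : 2 < x) :
    bumpPair l x = 2 * envelope l x * cosh (phase l x) := by
  rw [bumpPair, bump_sub_two hx, bump_add_two hx, cosh_eq]
  ring

theorem bumpPair_pos (hx : 2 < x) : 0 < bumpPair l x := by
  rw [bumpPair_eq_envelope_mul_cosh hx]
  exact mul_pos (mul_pos two_pos (envelope_pos hx)) (cosh_pos _)

end Factorization

section Monotonicity

variable {l x : ℝ}

theorem hasDerivAt_bump {s : ℝ} (hs : 0 < s) :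
    HasDerivAt (bump l) (bump l s * (l / s - s / 2)) s := by
  have hexp := (((hasDerivAt_id s).pow 2).neg.div_const 4).exp
  refine (hexp.mul (hasDerivAt_rpow_const (Or.inl hs.ne'))).congr_deriv ?_
  rw [bump, rpow_sub_one hs.ne']
  simp only [id, Pi.neg_apply, Pi.pow_apply]
  field_simp
  ring

theorem hasDerivAt_bumpPair (hx : 2 < x) :
    HasDerivAt (bumpPair l)
      (envelope l x / (x ^ 2 - 4) *
        (2 * (x ^ 2 - 4 + 2 * l) * sinh (phase l x)
          - x * (x ^ 2 - 4 - 2 * l) * cosh (phase l x))) x := by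
  have hsub : 0 < x - 2 := sub_pos.2 hx
  have hadd : 0 < x + 2 := by linarith
  refine (((hasDerivAt_bump hsub).comp_sub_const x 2).add
    ((hasDerivAt_bump hadd).comp_add_const x 2)).congr_deriv ?_
  rw [bump_sub_two hx, bump_add_two hx, sinh_eq, cosh_eq,
    show x ^ 2 - 4 = (x - 2) * (x + 2) by ring]
  field_simp
  ring

theorem le_phase (hl : 0 ≤ l) (hx : 2 < x) :
    x * (x ^ 2 - 4 - 2 * l) / (x ^ 2 - 4) ≤ phase l x := by
  have hsq : 0 < x ^ 2 - 4 := by nlinarith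
  have hlog := mul_le_mul_of_nonneg_left (log_add_sub_log_sub_le zero_le_two hx)
    (show 0 ≤ l / 2 by linarith)
  calc x * (x ^ 2 - 4 - 2 * l) / (x ^ 2 - 4)
      = x - l / 2 * (2 * 2 * x / (x ^ 2 - 2 ^ 2)) := by
        rw [show (2 : ℝ) ^ 2 = 4 by norm_num]
        field_simp
    _ ≤ phase l x := sub_le_sub_left hlog x

theorem mul_cosh_phase_le_mul_sinh_phase (hl : 1 ≤ l) (hx : 2 < x)
    (hlower : 2 * (l + 2) ≤ x ^ 2) (hupper : x ^ 2 ≤ 2 * (l + 4)) :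
    x * (x ^ 2 - 4 - 2 * l) * cosh (phase l x)
      ≤ 2 * (x ^ 2 - 4 + 2 * l) * sinh (phase l x) := by
  have hsq : 0 < x ^ 2 - 4 := by linarith
  set y := x * (x ^ 2 - 4 - 2 * l) / (x ^ 2 - 4)
  have hy_mul : y * (x ^ 2 - 4) = x * (x ^ 2 - 4 - 2 * l) := div_mul_cancel₀ _ hsq.ne'
  have hy_nonneg : 0 ≤ y := div_nonneg (mul_nonneg (by linarith) (by linarith)) hsq.le
  rw [← hy_mul]
  refine mul_mul_cosh_le_mul_sinh hy_nonneg (le_phase (by linarith) hx) (by linarith) ?_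
  obtain ⟨e, he⟩ : ∃ e, x ^ 2 = 2 * l + 4 + e := ⟨x ^ 2 - 2 * l - 4, by ring⟩
  have he_nonneg : 0 ≤ e := by linarith
  have he_sq : e ^ 2 ≤ 4 * e := by
    rw [sq]
    exact mul_le_mul_of_nonneg_right (by linarith) he_nonneg
  have he_cube : e ^ 3 ≤ 4 * e ^ 2 := by
    rw [pow_succ']
    exact mul_le_mul_of_nonneg_right (by linarith) (sq_nonneg e)
  have hl_mul_e : e ≤ l * e := le_mul_of_one_le_left he_nonneg hl
  have hl_mul_sq : l * e ^ 2 ≤ l * (4 * e) := mul_le_mul_of_nonneg_left he_sq (by linarith)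
  calc (x ^ 2 - 4) ^ 2 * (1 + y ^ 2)
      = (x ^ 2 - 4) ^ 2 + x ^ 2 * (x ^ 2 - 4 - 2 * l) ^ 2 := by
        rw [← mul_pow, ← hy_mul]; ring
    _ = (2 * l + e) ^ 2 + (2 * l + 4 + e) * e ^ 2 := by rw [he]; ring
    _ ≤ (2 * (4 * l + e)) ^ 2 := by linarith [sq_nonneg l]
    _ = (2 * (x ^ 2 - 4 + 2 * l)) ^ 2 := by rw [he]; ring

theorem monotoneOn_bumpPair (hl : 1 ≤ l) :
    MonotoneOn (bumpPair l) (Set.Icc √(2 * (l + 2)) √(2 * (l + 4))) := by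
  have htwo_lt : 2 < √(2 * (l + 2)) := lt_sqrt_of_sq_lt (by linarith)
  have hderiv {x : ℝ} (hx : √(2 * (l + 2)) ≤ x) :=
    hasDerivAt_bumpPair (l := l) (htwo_lt.trans_le hx)
  refine monotoneOn_of_deriv_nonneg (convex_Icc _ _)
    (fun x hx => (hderiv hx.1).continuousAt.continuousWithinAt)
    (fun x hx => (hderiv (interior_subset hx).1).differentiableAt.differentiableWithinAt)
    fun x hx => ?_
  obtain ⟨hlower, hupper⟩ := interior_subset hx
  have hx2 : 2 < x := htwo_lt.trans_le hlower
  rw [(hderiv hlower).deriv]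
  exact mul_nonneg (div_nonneg (envelope_pos hx2).le (by nlinarith))
    (sub_nonneg.2 (mul_cosh_phase_le_mul_sinh_phase hl hx2
      ((sqrt_le_left (by linarith)).1 hlower) ((le_sqrt' (by linarith)).1 hupper)))

end Monotonicity

section InitialTime

variable {l : ℝ}

theorem hasDerivAt_phase_sq_half_sub_three {x : ℝ} (hx : 2 < x) :
    HasDerivAt (fun x => phase (x ^ 2 / 2 - 3) x)
      (2 - 2 / (x ^ 2 - 4) - x / 2 * (log (x + 2) - log (x - 2))) x := by
  have hsub : x - 2 ≠ 0 := by linarith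
  have hadd : x + 2 ≠ 0 := by linarith
  have hsq : x ^ 2 - 4 ≠ 0 := by nlinarith
  have hlogs := (((hasDerivAt_id x).add_const 2).log hadd).sub
    (((hasDerivAt_id x).sub_const 2).log hsub)
  have hcoeff := ((((hasDerivAt_id x).pow 2).div_const 2).sub_const 3).div_const 2
  refine ((hasDerivAt_id x).sub (hcoeff.mul hlogs)).congr_deriv ?_
  have hinv : 1 / (x + 2) - 1 / (x - 2) = -4 / (x ^ 2 - 4) := by
    rw [show x ^ 2 - 4 = (x - 2) * (x + 2) by ring]
    field_simp
    ring
  simp only [id, Pi.pow_apply, Pi.sub_apply, hinv]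
  field_simp
  ring

theorem strictAntiOn_phase_sq_half_sub_three :
    StrictAntiOn (fun x => phase (x ^ 2 / 2 - 3) x) (Set.Ioi 2) := by
  refine strictAntiOn_of_deriv_neg (convex_Ioi 2) (fun x hx =>
    (hasDerivAt_phase_sq_half_sub_three hx).continuousAt.continuousWithinAt) fun x hx => ?_
  rw [interior_Ioi] at hx
  have hx2 : 2 < x := hx
  rw [(hasDerivAt_phase_sq_half_sub_three hx2).deriv]
  have hlog : 2 ≤ x / 2 * (log (x + 2) - log (x - 2)) := by
    have := mul_le_mul_of_nonneg_left (le_log_add_sub_log_sub zero_le_two hx2)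
      (show 0 ≤ x / 2 by linarith)
    refine le_of_eq_of_le ?_ this
    field_simp
  have hpos : 0 < 2 / (x ^ 2 - 4) := div_pos two_pos (by nlinarith)
  linarith

theorem cosh_phase_sqrt_lt (hl : 1 < l) :
    cosh (phase l √(2 * (l + 3))) < cosh (phase (l - 2) √(2 * (l + 1))) := by
  have hb : 2 < √(2 * (l + 1)) := lt_sqrt_of_sq_lt (by linarith)
  have hba : √(2 * (l + 1)) < √(2 * (l + 3)) := sqrt_lt_sqrt (by linarith) (by linarith)
  have ha_sq : √(2 * (l + 3)) ^ 2 = 2 * (l + 3) := sq_sqrt (by linarith)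
  have hb_sq : √(2 * (l + 1)) ^ 2 = 2 * (l + 1) := sq_sqrt (by linarith)
  have hphase := strictAntiOn_phase_sq_half_sub_three hb (hb.trans hba) hba
  simp only [ha_sq, hb_sq] at hphase
  rw [show 2 * (l + 3) / 2 - 3 = l by ring, show 2 * (l + 1) / 2 - 3 = l - 2 by ring] at hphase
  have hphase_nonneg : 0 ≤ phase l √(2 * (l + 3)) :=
    le_trans (div_nonneg (mul_nonneg (sqrt_nonneg _) (by linarith)) (by linarith))
      (le_phase (by linarith) (hb.trans hba))
  exact cosh_strictMonoOn hphase_nonneg (hphase_nonneg.trans hphase.le) hphase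

/-- For `a = √(2 (l + 3))`, `b = √(2 (l + 1))` and `E = envelope`, the left side is one more than
`log (a E_l(a) / (2 l b E_{l-2}(b)))`. -/
theorem log_combination_le_one (hl : 3 ≤ l) :
    (log (l + 3) - log (l + 1)) / 2 + l / 2 * (log (l + 1) - log (l - 1))
      + (log (l - 1) - log l) ≤ 1 := by
  have houter := log_add_sub_log_sub_le (c := 1) (x := l + 2) zero_le_one (by linarith)
  have hinner := log_add_sub_log_sub_le (c := 1) (x := l) zero_le_one (by linarith)
  rw [show l + 2 + 1 = l + 3 by ring, show l + 2 - 1 = l + 1 by ring] at houter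
  have hinner' := mul_le_mul_of_nonneg_left hinner (show 0 ≤ l / 2 by linarith)
  have hlast : log (l - 1) - log l ≤ (l - 1) / l - 1 := by
    rw [← log_div (by linarith) (by linarith)]
    exact log_le_sub_one_of_pos (div_pos (by linarith) (by linarith))
  have hrational : 2 * 1 * (l + 2) / ((l + 2) ^ 2 - 1 ^ 2) / 2
      + l / 2 * (2 * 1 * l / (l ^ 2 - 1 ^ 2)) + ((l - 1) / l - 1)
      = 1 - (l - 3) / (l * (l - 1) * (l + 3)) := by
    have hl0 : l ≠ 0 := by linarith
    have hl1 : l - 1 ≠ 0 := by linarith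
    have hl2 : l + 1 ≠ 0 := by linarith
    have hl3 : l + 3 ≠ 0 := by linarith
    rw [show (l + 2) ^ 2 - 1 ^ 2 = (l + 1) * (l + 3) by ring,
      show l ^ 2 - 1 ^ 2 = (l - 1) * (l + 1) by ring]
    field_simp
    ring
  have hgap : 0 ≤ (l - 3) / (l * (l - 1) * (l + 3)) :=
    div_nonneg (by linarith) (mul_nonneg (mul_nonneg (by linarith) (by linarith)) (by linarith))
  linarith

theorem sqrt_mul_envelope_le (hl : 3 ≤ l) :
    √(2 * (l + 3)) * envelope l √(2 * (l + 3))
      ≤ 2 * l * √(2 * (l + 1)) * envelope (l - 2) √(2 * (l + 1)) := by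
  have log_two_mul {u : ℝ} (hu : 0 < u) : log (2 * u) = log 2 + log u :=
    log_mul two_ne_zero hu.ne'
  have ha : 0 < √(2 * (l + 3)) := sqrt_pos.2 (by linarith)
  have hb : 0 < √(2 * (l + 1)) := sqrt_pos.2 (by linarith)
  have ha_sq : √(2 * (l + 3)) ^ 2 = 2 * (l + 3) := sq_sqrt (by linarith)
  have hb_sq : √(2 * (l + 1)) ^ 2 = 2 * (l + 1) := sq_sqrt (by linarith)
  have ha_sub : 2 * (l + 3) - 4 = 2 * (l + 1) := by ring
  have hb_sub : 2 * (l + 1) - 4 = 2 * (l - 1) := by ring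
  have ha_base : 0 < 2 * (l + 1) := by linarith
  have hb_base : 0 < 2 * (l - 1) := by linarith
  have hlogs := log_combination_le_one hl
  rw [envelope, envelope, ha_sq, hb_sq, ha_sub, hb_sub, rpow_def_of_pos ha_base,
    rpow_def_of_pos hb_base, ← exp_log ha, ← exp_log hb, ← exp_log (show 0 < 2 * l by linarith),
    log_sqrt (by linarith), log_sqrt (by linarith), log_two_mul (u := l + 3) (by linarith),
    log_two_mul (u := l + 1) (by linarith), log_two_mul (u := l - 1) (by linarith),
    log_two_mul (u := l) (by linarith)]
  simp only [← exp_add]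
  exact exp_le_exp.2 (by linarith)

theorem sqrt_mul_bumpPair_lt (hl : 3 ≤ l) :
    √(2 * (l + 3)) * bumpPair l √(2 * (l + 3))
      < 2 * l * √(2 * (l + 1)) * bumpPair (l - 2) √(2 * (l + 1)) := by
  have hb : 2 < √(2 * (l + 1)) := lt_sqrt_of_sq_lt (by linarith)
  have ha : 2 < √(2 * (l + 3)) := lt_sqrt_of_sq_lt (by linarith)
  have henvelope := sqrt_mul_envelope_le hl
  have hcosh := cosh_phase_sqrt_lt (show 1 < l by linarith)
  have hpos : 0 < √(2 * (l + 3)) * envelope l √(2 * (l + 3)) :=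
    mul_pos (by linarith) (envelope_pos ha)
  have hmul := mul_lt_mul' henvelope hcosh (cosh_pos _).le (hpos.trans_le henvelope)
  rw [bumpPair_eq_envelope_mul_cosh ha, bumpPair_eq_envelope_mul_cosh hb]
  linarith

end InitialTime

section TimeDependence

variable {l t : ℝ}

theorem bumpPair_sqrt_sub_le (hl : 1 ≤ l) (ht0 : 0 ≤ t)
    (ht : t ≤ √(2 * (l + 3)) - √(2 * (l + 2))) :
    bumpPair l (√(2 * (l + 3)) - t) ≤ bumpPair l √(2 * (l + 3)) := by
  have hupper : √(2 * (l + 3)) ≤ √(2 * (l + 4)) := sqrt_le_sqrt (by linarith)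
  exact monotoneOn_bumpPair hl ⟨by linarith, by linarith⟩ ⟨by linarith, hupper⟩ (by linarith)

theorem bumpPair_le_bumpPair_sqrt_add (hl : 3 ≤ l) (ht0 : 0 ≤ t)
    (ht : t ≤ √(2 * (l + 3)) - √(2 * (l + 2))) :
    bumpPair (l - 2) √(2 * (l + 1)) ≤ bumpPair (l - 2) (√(2 * (l + 1)) + t) := by
  have hmono := monotoneOn_bumpPair (l := l - 2) (by linarith)
  rw [show l - 2 + 2 = l by ring, show l - 2 + 4 = l + 2 by ring] at hmono
  have hlower : √(2 * l) ≤ √(2 * (l + 1)) := sqrt_le_sqrt (by linarith)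
  have hmid := sqrt_add_sqrt_le_two_mul_sqrt_midpoint (u := 2 * (l + 3)) (v := 2 * (l + 1))
    (by linarith) (by linarith)
  rw [show (2 * (l + 3) + 2 * (l + 1)) / 2 = 2 * (l + 2) by ring] at hmid
  exact hmono ⟨hlower, by linarith⟩ ⟨by linarith, by linarith⟩ (by linarith)

end TimeDependence

theorem pointwise_inequality_general (lam : ℝ) (hlam : 3 ≤ lam)
    (H : ℝ → ℝ → ℝ)
    (hH : ∀ l s : ℝ, H l s
        = exp (-(s - 2) ^ 2 / 4) * (s - 2) ^ l + exp (-(s + 2) ^ 2 / 4) * (s + 2) ^ l)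
    (t : ℝ) (ht0 : 0 ≤ t)
    (ht : t ≤ Real.sqrt (2 * (lam + 3)) - Real.sqrt (2 * (lam + 2))) :
    (2 * Real.sqrt (2 * (lam + 3)) - t) * H lam (Real.sqrt (2 * (lam + 3)) - t)
      < 2 * lam * (2 * Real.sqrt (2 * (lam + 1)) + t)
          * H (lam - 2) (Real.sqrt (2 * (lam + 1)) + t) := by
  obtain rfl : H = bumpPair := funext₂ hH
  have hmid : 2 < √(2 * (lam + 2)) := lt_sqrt_of_sq_lt (by linarith)
  have hb : 2 < √(2 * (lam + 1)) := lt_sqrt_of_sq_lt (by linarith)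
  calc (2 * √(2 * (lam + 3)) - t) * bumpPair lam (√(2 * (lam + 3)) - t)
      ≤ 2 * √(2 * (lam + 3)) * bumpPair lam √(2 * (lam + 3)) :=
        mul_le_mul (by linarith) (bumpPair_sqrt_sub_le (by linarith) ht0 ht)
          (bumpPair_pos (by linarith)).le (by linarith)
    _ < 2 * lam * (2 * √(2 * (lam + 1)) * bumpPair (lam - 2) √(2 * (lam + 1))) := by
        linarith [sqrt_mul_bumpPair_lt hlam]
    _ ≤ 2 * lam * ((2 * √(2 * (lam + 1)) + t) * bumpPair (lam - 2) (√(2 * (lam + 1)) + t)) :=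
        mul_le_mul_of_nonneg_left
          (mul_le_mul (by linarith) (bumpPair_le_bumpPair_sqrt_add hlam ht0 ht)
            (bumpPair_pos hb).le (by linarith)) (by linarith)
    _ = _ := (mul_assoc _ _ _).symm

/-- The pointwise inequality
`(2 r_{λ+4} - t) H_λ(r_{λ+4} - t) < 2λ (2 r_{λ+2} + t) H_{λ-2}(r_{λ+2} + t)`
for `λ > λ₀ = (28 + 11√7)/9` and `0 ≤ t < r_{λ+4} - r_{λ+3}`,
where `r_μ = √(2(μ-1))`, `h_l(s) = e^{-s²/4} s^l` and
`H_l(s) = h_l(s-2) + h_l(s+2)`. -/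
theorem pointwise_inequality (lam : ℝ) (hlam : (28 + 11 * Real.sqrt 7) / 9 < lam)
    (H : ℝ → ℝ → ℝ)
    (hH : ∀ l s : ℝ, H l s
        = exp (-(s - 2) ^ 2 / 4) * (s - 2) ^ l + exp (-(s + 2) ^ 2 / 4) * (s + 2) ^ l)
    (t : ℝ) (ht0 : 0 ≤ t)
    (ht : t < Real.sqrt (2 * (lam + 3)) - Real.sqrt (2 * (lam + 2))) :
    (2 * Real.sqrt (2 * (lam + 3)) - t) * H lam (Real.sqrt (2 * (lam + 3)) - t)
      < 2 * lam * (2 * Real.sqrt (2 * (lam + 1)) + t)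
          * H (lam - 2) (Real.sqrt (2 * (lam + 1)) + t) :=
  pointwise_inequality_general lam (by linarith [sqrt_nonneg 7]) H hH t ht0 ht.le
end

section
/- Let λ > 1, r_λ = √(2(λ−1)), and 0 < ε₀ < r_λ < R₀. Let f : [ε₀, R₀] → ℝ be a positive solution of f''/(1 + (f')²) = (r/2 − (λ−1)/r) f' − f/2 such that ∫_{ε₀}^{R₀} f(r)(1 + (λ−1)/r²) dr ≤ π. Then f(r) ≤ max( f(ε₀), 2π/(r_λ − ε₀) ) for all r ∈ [ε₀, r_λ], and f(r) ≤ max( f(R₀), 2π/(R₀ − r_λ) ) for all r ∈ [r_λ, R₀]. -/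
open Real MeasureTheory

/-!
Let `a r = r/2 - (λ-1)/r`, so that the equation reads `(arctan f')' = a f' - f/2`. On `(ε₀, r_λ)`
the coefficient `a` is negative and `a' ≥ 1/2`. There `f` is concave exactly where
`φ = f' - f/(2a)` is positive, and as long as `φ > 0` one has `φ' ≥ f'' = (1 + f'²) a φ`, so `φ`
decays at most exponentially: concavity propagates to the right. As `f` has no interior local
minimum, `f(ε₀) < f(m)` forces `f' ≥ 0`, hence concavity, at points arbitrarily close to `ε₀`.
So `f` is concave on all of `[ε₀, r_λ]`, its graph lies above a triangle of height `f(m)`, and the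
area of that triangle is at most `π`. The second bound follows by the reflection `r ↦ -r`.

As `deriv` is `0` at points of non-differentiability, the equation does not say that `f` is
differentiable. This is recovered from it: wherever `f'` or `f''` is nonzero it is a genuine
derivative, and at a zero of `f'` the equation gives `f'' = -f/2 ≠ 0`.
-/

open Filter Set Topology

section Calculus

variable {f g : ℝ → ℝ}

theorem exists_pos_tendsto_nhdsGT_of_deriv_mem_Ioo {x C : ℝ}
    (hf' : ∀ᶠ r in 𝓝[>] x, deriv f r ∈ Ioo C 0) (hpos : ∀ᶠ r in 𝓝[>] x, 0 < f r) :
    ∃ l > 0, Tendsto f (𝓝[>] x) (𝓝 l) := by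
  obtain ⟨y, hxy, hy⟩ := mem_nhdsGT_iff_exists_Ioo_subset.1 (hf'.and hpos)
  obtain ⟨z, hz⟩ : (Ioo x y).Nonempty := nonempty_Ioo.2 hxy
  have hdiff : DifferentiableOn ℝ f (Ioo x y) := fun r hr =>
    (differentiableAt_of_deriv_ne_zero (hy hr).1.2.ne).differentiableWithinAt
  have hanti : AntitoneOn f (Ioo x y) :=
    (strictAntiOn_of_deriv_neg (convex_Ioo x y) hdiff.continuousOn
      (by rw [interior_Ioo]; exact fun r hr => (hy hr).1.2)).antitoneOn
  have hslope := (convex_Ioo x y).mul_sub_le_image_sub_of_le_deriv hdiff.continuousOn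
    (by rwa [interior_Ioo]) (C := C) (by rw [interior_Ioo]; exact fun r hr => (hy hr).1.1.le)
  have hC : C < 0 := (hy hz).1.1.trans (hy hz).1.2
  have hbdd : BddAbove (f '' Ioo x y) := by
    refine ⟨f z - C * (z - x), forall_mem_image.2 fun r hr => ?_⟩
    rcases le_total r z with hrz | hzr
    · nlinarith [hslope r hr z hz hrz, hr.1]
    · nlinarith [hanti hz hr hzr, hz.1]
  exact ⟨_, (hy hz).2.trans_le (le_csSup hbdd (mem_image_of_mem f hz)),
    hanti.tendsto_nhdsWithin_Ioo_right ⟨z, hz⟩ hbdd⟩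

theorem le_deriv_of_eventually_le_deriv_nhdsLT {c : ℝ} (hfc : DifferentiableAt ℝ f c)
    (hf : ∀ᶠ t in 𝓝[<] c, DifferentiableAt ℝ f t) (hg : ContinuousWithinAt g (Iio c) c)
    (hle : ∀ᶠ t in 𝓝[<] c, g t ≤ deriv f t) : g c ≤ deriv f c := by
  refine le_of_forall_lt_imp_le_of_dense fun b hb => ?_
  obtain ⟨s, hsc, hs⟩ := mem_nhdsLT_iff_exists_Ioo_subset.1
    ((hf.and hle).and (hg.eventually_const_lt hb))
  refine ge_of_tendsto ((hasDerivWithinAt_iff_tendsto_slope' (s := Iio c) self_notMem_Iio).1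
    hfc.hasDerivAt.hasDerivWithinAt) ?_
  filter_upwards [Ioo_mem_nhdsLT hsc] with t ht
  have hdiff : ∀ r ∈ Icc t c, DifferentiableAt ℝ f r := fun r hr => by
    rcases hr.2.eq_or_lt with rfl | hrc
    exacts [hfc, (hs ⟨ht.1.trans_le hr.1, hrc⟩).1.1]
  have hbt := (convex_Icc t c).mul_sub_le_image_sub_of_le_deriv (C := b)
    (fun r hr => (hdiff r hr).continuousAt.continuousWithinAt)
    (fun r hr => (hdiff r (interior_subset hr)).differentiableWithinAt)
    (fun r hr => by
      rw [interior_Icc] at hr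
      have hr' := hs ⟨ht.1.trans hr.1, hr.2⟩
      exact hr'.2.le.trans hr'.1.2)
    t (left_mem_Icc.2 ht.2.le) c (right_mem_Icc.2 ht.2.le) ht.2.le
  rwa [slope_comm, slope_def_field, le_div_iff₀ (sub_pos.2 ht.2)]

theorem mul_exp_le_of_neg_mul_le_deriv {K s c : ℝ} (hg : ∀ t ∈ Ico s c, DifferentiableAt ℝ g t)
    (hg' : ∀ t ∈ Ico s c, -(K * g t) ≤ deriv g t) {t : ℝ} (ht : t ∈ Ico s c) :
    g s * exp (-(K * (t - s))) ≤ g t := by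
  have hder : ∀ r ∈ Ico s c, HasDerivAt (fun r => exp (K * r) * g r)
      (exp (K * r) * (K * g r + deriv g r)) r := fun r hr =>
    ((((hasDerivAt_id' r).const_mul K).exp).mul (hg r hr).hasDerivAt).congr_deriv (by ring)
  have hmono : MonotoneOn (fun r => exp (K * r) * g r) (Ico s c) := by
    refine monotoneOn_of_deriv_nonneg (convex_Ico s c)
      (fun r hr => (hder r hr).continuousAt.continuousWithinAt)
      (fun r hr => (hder r (interior_subset hr)).differentiableAt.differentiableWithinAt)
      fun r hr => ?_
    rw [(hder r (interior_subset hr)).deriv]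
    exact mul_nonneg (exp_pos _).le (by linarith [hg' r (interior_subset hr)])
  have hst : exp (K * s) * g s ≤ exp (K * t) * g t :=
    hmono ⟨le_rfl, ht.1.trans_lt ht.2⟩ ht ht.1
  have hexp : exp (K * s) = exp (K * t) * exp (-(K * (t - s))) := by
    rw [← exp_add]
    ring_nf
  rw [hexp, mul_assoc] at hst
  linarith [le_of_mul_le_mul_left hst (exp_pos _)]

end Calculus

section Area

variable {f : ℝ → ℝ} {a b : ℝ}

/-- The trapezoid half of the Hermite–Hadamard inequality. -/
theorem trapezoid_le_integral_of_concaveOn (hf : ConcaveOn ℝ (Icc a b) f)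
    (hc : ContinuousOn f (Icc a b)) (hab : a ≤ b) :
    (b - a) * ((f a + f b) / 2) ≤ ∫ r in a..b, f r := by
  have hmaps : MapsTo (fun t => a + (b - a) * t) (Icc 0 1) (Icc a b) := fun t ht =>
    ⟨by nlinarith [ht.1], by nlinarith [ht.2]⟩
  have hchord : ∀ t ∈ Icc (0 : ℝ) 1, f a + (f b - f a) * t ≤ f (a + (b - a) * t) := by
    intro t ht
    have := hf.2 (left_mem_Icc.2 hab) (right_mem_Icc.2 hab) (sub_nonneg.2 ht.2) ht.1
      (sub_add_cancel 1 t)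
    simp only [smul_eq_mul] at this
    rw [show a + (b - a) * t = (1 - t) * a + t * b by ring]
    linarith
  calc (b - a) * ((f a + f b) / 2) = (b - a) * ∫ t in (0 : ℝ)..1, (f a + (f b - f a) * t) := by
        rw [intervalIntegral.integral_add (by simp)
          (Continuous.intervalIntegrable (by fun_prop) 0 1), intervalIntegral.integral_const_mul,
          intervalIntegral.integral_const, integral_id, smul_eq_mul]
        ring
    _ ≤ (b - a) * ∫ t in (0 : ℝ)..1, f (a + (b - a) * t) := by
        refine mul_le_mul_of_nonneg_left ?_ (sub_nonneg.2 hab)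
        exact intervalIntegral.integral_mono_on zero_le_one
          (Continuous.intervalIntegrable (by fun_prop) 0 1)
          ((hc.comp (by fun_prop) hmaps).intervalIntegrable_of_Icc zero_le_one) hchord
    _ = ∫ r in a..b, f r := by
        rw [intervalIntegral.mul_integral_comp_add_mul]
        ring_nf

theorem triangle_le_integral_of_concaveOn {m : ℝ} (hf : ConcaveOn ℝ (Icc a b) f)
    (hc : ContinuousOn f (Icc a b)) (hm : m ∈ Icc a b) (ha : 0 ≤ f a) (hb : 0 ≤ f b) :
    (b - a) * (f m / 2) ≤ ∫ r in a..b, f r := by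
  have hleft : Icc a m ⊆ Icc a b := Icc_subset_Icc_right hm.2
  have hright : Icc m b ⊆ Icc a b := Icc_subset_Icc_left hm.1
  calc (b - a) * (f m / 2)
      ≤ (m - a) * ((f a + f m) / 2) + (b - m) * ((f m + f b) / 2) := by
        linarith [mul_nonneg (sub_nonneg.2 hm.1) ha, mul_nonneg (sub_nonneg.2 hm.2) hb]
    _ ≤ (∫ r in a..m, f r) + ∫ r in m..b, f r := add_le_add
        (trapezoid_le_integral_of_concaveOn (hf.subset hleft (convex_Icc a m)) (hc.mono hleft) hm.1)
        (trapezoid_le_integral_of_concaveOn (hf.subset hright (convex_Icc m b)) (hc.mono hright)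
          hm.2)
    _ = ∫ r in a..b, f r := intervalIntegral.integral_add_adjacent_intervals
        ((hc.mono hleft).intervalIntegrable_of_Icc hm.1)
        ((hc.mono hright).intervalIntegrable_of_Icc hm.2)

theorem integral_le_integral_mul_of_one_le {w : ℝ → ℝ} {c d : ℝ} (hac : a ≤ c) (hcd : c ≤ d)
    (hdb : d ≤ b) (hf : ContinuousOn f (Icc a b)) (hw : ContinuousOn w (Icc a b))
    (hf0 : ∀ r ∈ Icc a b, 0 ≤ f r) (hw1 : ∀ r ∈ Icc a b, 1 ≤ w r) :
    ∫ r in c..d, f r ≤ ∫ r in a..b, f r * w r := by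
  have hab : a ≤ b := hac.trans (hcd.trans hdb)
  calc ∫ r in c..d, f r ≤ ∫ r in a..b, f r := by
        refine intervalIntegral.integral_mono_interval hac hcd hdb ?_
          (hf.intervalIntegrable_of_Icc hab)
        filter_upwards [ae_restrict_mem measurableSet_Ioc] with r hr
        exact hf0 r (Ioc_subset_Icc_self hr)
    _ ≤ ∫ r in a..b, f r * w r :=
        intervalIntegral.integral_mono_on hab (hf.intervalIntegrable_of_Icc hab)
          ((hf.mul hw).intervalIntegrable_of_Icc hab) fun r hr =>
          le_mul_of_one_le_right (hf0 r hr) (hw1 r hr)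

end Area

/-- The derivative `a f' - f/2` of the tangent angle `arctan f'` prescribed by the graphical
geodesic equation, for a general coefficient `a` of `f'`. -/
noncomputable def angleRate (a f : ℝ → ℝ) (r : ℝ) : ℝ :=
  a r * deriv f r - f r / 2

/-- `f` is a positive solution on `[p, q]` of the graphical geodesic equation
`f'' / (1 + f'²) = a f' - f/2` with continuous coefficient `a`. Differentiability of `f` is not
assumed, and at `p` and `q` the derivatives are two-sided. -/
structure IsGeodesicGraphOn (a : ℝ → ℝ) (p q : ℝ) (f : ℝ → ℝ) : Prop where
  continuousOn_coeff : ContinuousOn a (Icc p q)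
  pos : ∀ r ∈ Icc p q, 0 < f r
  eqn : ∀ r ∈ Icc p q, deriv (deriv f) r / (1 + deriv f r ^ 2) = angleRate a f r

/-- The excess `f' - f/(2a)` of the slope over the value at which `angleRate` vanishes. -/
noncomputable def slopeExcess (a f : ℝ → ℝ) (r : ℝ) : ℝ :=
  deriv f r - f r / (2 * a r)

theorem angleRate_eq_mul_slopeExcess {a f : ℝ → ℝ} {r : ℝ} (ha : a r ≠ 0) :
    angleRate a f r = a r * slopeExcess a f r := by
  unfold angleRate slopeExcess
  field_simp

theorem slopeExcess_pos {a f : ℝ → ℝ} {r : ℝ} (ha : a r < 0) (hu : angleRate a f r < 0) :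
    0 < slopeExcess a f r := by
  rw [angleRate_eq_mul_slopeExcess ha.ne] at hu
  exact pos_of_mul_neg_right hu ha.le

namespace IsGeodesicGraphOn

variable {a f : ℝ → ℝ} {p q r x s c m A : ℝ}

theorem mono (h : IsGeodesicGraphOn a p q f) {p' q' : ℝ} (hp : p ≤ p') (hq : q' ≤ q) :
    IsGeodesicGraphOn a p' q' f :=
  have hs : Icc p' q' ⊆ Icc p q := Icc_subset_Icc hp hq
  ⟨h.continuousOn_coeff.mono hs, fun r hr => h.pos r (hs hr), fun r hr => h.eqn r (hs hr)⟩

theorem comp_neg (h : IsGeodesicGraphOn a p q f) :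
    IsGeodesicGraphOn (fun r => -a (-r)) (-q) (-p) (fun r => f (-r)) := by
  have hmaps : MapsTo (fun r : ℝ => -r) (Icc (-q) (-p)) (Icc p q) := fun r hr =>
    ⟨le_neg_of_le_neg hr.2, neg_le_of_neg_le hr.1⟩
  have hd : deriv (fun r => f (-r)) = fun r => -deriv f (-r) := funext (deriv_comp_neg f)
  have hdd (r : ℝ) : deriv (deriv fun r => f (-r)) r = deriv (deriv f) (-r) := by
    rw [hd, deriv.fun_neg, deriv_comp_neg, neg_neg]
  refine ⟨(h.continuousOn_coeff.comp continuousOn_neg hmaps).neg, fun r hr => h.pos _ (hmaps hr),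
    fun r hr => ?_⟩
  rw [hdd]
  simpa only [hd, angleRate, neg_sq, neg_mul_neg] using h.eqn _ (hmaps hr)

theorem deriv_deriv_eq (h : IsGeodesicGraphOn a p q f) (hr : r ∈ Icc p q) :
    deriv (deriv f) r = (1 + deriv f r ^ 2) * angleRate a f r := by
  rw [← h.eqn r hr, mul_div_cancel₀]
  positivity

theorem deriv_deriv_neg (h : IsGeodesicGraphOn a p q f) (hr : r ∈ Icc p q)
    (hu : angleRate a f r < 0) : deriv (deriv f) r < 0 := by
  rw [h.deriv_deriv_eq hr]
  exact mul_neg_of_pos_of_neg (by positivity) hu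

theorem differentiableAt_deriv (h : IsGeodesicGraphOn a p q f) (hr : r ∈ Icc p q)
    (hu : angleRate a f r ≠ 0) : DifferentiableAt ℝ (deriv f) r := by
  apply differentiableAt_of_deriv_ne_zero
  rw [h.deriv_deriv_eq hr]
  exact mul_ne_zero (by positivity) hu

theorem angleRate_neg_of_coeff_mul_deriv_nonpos (h : IsGeodesicGraphOn a p q f) (hr : r ∈ Icc p q)
    (hle : a r * deriv f r ≤ 0) : angleRate a f r < 0 := by
  unfold angleRate
  linarith [h.pos r hr]

/-! ### Differentiability of solutions -/

theorem hasDerivAt_deriv_of_deriv_eq_zero (h : IsGeodesicGraphOn a p q f) (hx : x ∈ Icc p q)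
    (h0 : deriv f x = 0) : HasDerivAt (deriv f) (-(f x / 2)) x := by
  have hu := h.angleRate_neg_of_coeff_mul_deriv_nonpos hx (by rw [h0, mul_zero])
  refine (h.differentiableAt_deriv hx hu.ne).hasDerivAt.congr_deriv ?_
  rw [h.deriv_deriv_eq hx, angleRate, h0]
  ring

theorem eventually_deriv_neg (h : IsGeodesicGraphOn a p q f) (hx : x ∈ Icc p q)
    (h0 : deriv f x = 0) : ∀ᶠ r in 𝓝[>] x, deriv f r < 0 := by
  have hslope := (hasDerivWithinAt_iff_tendsto_slope' (s := Ioi x) self_notMem_Ioi).1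
    (h.hasDerivAt_deriv_of_deriv_eq_zero hx h0).hasDerivWithinAt
  filter_upwards [hslope.eventually_lt_const (u := 0) (by linarith [h.pos x hx]),
    self_mem_nhdsWithin] with r hr hxr
  rw [slope_def_field, h0, sub_zero] at hr
  exact neg_of_div_neg_left hr (sub_pos.2 hxr).le

theorem tendsto_nhdsGT_of_deriv_eq_zero (h : IsGeodesicGraphOn a p q f) (hx : x ∈ Ico p q)
    (h0 : deriv f x = 0) : Tendsto f (𝓝[>] x) (𝓝 (f x)) := by
  have hxI : x ∈ Icc p q := Ico_subset_Icc_self hx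
  have hd := h.hasDerivAt_deriv_of_deriv_eq_zero hxI h0
  have hd0 : Tendsto (deriv f) (𝓝[>] x) (𝓝 0) :=
    h0 ▸ hd.continuousAt.tendsto.mono_left nhdsWithin_le_nhds
  have hmem : ∀ᶠ r in 𝓝[>] x, r ∈ Icc p q := by
    filter_upwards [Ioo_mem_nhdsGT hx.2] with r hr using ⟨hx.1.trans hr.1.le, hr.2.le⟩
  obtain ⟨l, hl0, hl⟩ := exists_pos_tendsto_nhdsGT_of_deriv_mem_Ioo (C := -1)
    ((hd0.eventually_const_lt (by norm_num)).and (h.eventually_deriv_neg hxI h0))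
    (hmem.mono h.pos)
  -- The equation forces `f''(x+) = -l/2`, whereas `f''(x) = -f(x)/2`.
  have hu : Tendsto (angleRate a f) (𝓝[>] x) (𝓝 (-(l / 2))) := by
    have ha : Tendsto a (𝓝[>] x) (𝓝 (a x)) :=
      (h.continuousOn_coeff x hxI).mono_of_mem_nhdsWithin hmem
    rw [show -(l / 2) = a x * 0 - l / 2 by ring]
    exact (ha.mul hd0).sub (hl.div_const 2)
  have hdd : Tendsto (deriv (deriv f)) (𝓝[>] x) (𝓝 (-(l / 2))) := by
    have : Tendsto (fun r => (1 + deriv f r ^ 2) * angleRate a f r) (𝓝[>] x) (𝓝 (-(l / 2))) := by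
      simpa using ((hd0.pow 2).const_add 1).mul hu
    exact this.congr' (hmem.mono fun r hr => (h.deriv_deriv_eq hr).symm)
  have hd' : HasDerivWithinAt (deriv f) (-(l / 2)) (Ici x) x :=
    hasDerivWithinAt_Ici_of_tendsto_deriv (s := {r | deriv (deriv f) r < 0})
      (fun r hr => (differentiableAt_of_deriv_ne_zero (ne_of_lt hr)).differentiableWithinAt)
      hd.continuousAt.continuousWithinAt (hdd.eventually_lt_const (by linarith)) hdd
  have hlx : -(l / 2) = -(f x / 2) :=
    (uniqueDiffWithinAt_Ici x).eq_deriv _ hd' hd.hasDerivWithinAt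
  rwa [show l = f x by linarith] at hl

theorem hasDerivWithinAt_Ici (h : IsGeodesicGraphOn a p q f) (hx : x ∈ Ico p q) :
    HasDerivWithinAt f (deriv f x) (Ici x) x := by
  by_cases h0 : deriv f x = 0
  · have hxI : x ∈ Icc p q := Ico_subset_Icc_self hx
    have hd := h.hasDerivAt_deriv_of_deriv_eq_zero hxI h0
    exact hasDerivWithinAt_Ici_of_tendsto_deriv (s := {r | deriv f r < 0} ∩ Ioi x)
      (fun r hr => (differentiableAt_of_deriv_ne_zero (ne_of_lt hr.1)).differentiableWithinAt)
      ((h.tendsto_nhdsGT_of_deriv_eq_zero hx h0).mono_left (nhdsWithin_mono x inter_subset_right))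
      (inter_mem (h.eventually_deriv_neg hxI h0) self_mem_nhdsWithin)
      (hd.continuousAt.tendsto.mono_left nhdsWithin_le_nhds)
  · exact (differentiableAt_of_deriv_ne_zero h0).hasDerivAt.hasDerivWithinAt

theorem hasDerivWithinAt_Iic (h : IsGeodesicGraphOn a p q f) (hx : x ∈ Ioc p q) :
    HasDerivWithinAt f (deriv f x) (Iic x) x := by
  have hneg := h.comp_neg.hasDerivWithinAt_Ici (x := -x) ⟨neg_le_neg hx.2, neg_lt_neg hx.1⟩
  rw [deriv_comp_neg, neg_neg] at hneg
  simpa [Function.comp_def] using HasDerivWithinAt.scomp (s := Iic x) x hneg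
    (hasDerivAt_neg x).hasDerivWithinAt fun r hr => neg_le_neg (mem_Iic.1 hr)

theorem differentiableAt (h : IsGeodesicGraphOn a p q f) (hx : x ∈ Ioo p q) :
    DifferentiableAt ℝ f x := by
  have := (h.hasDerivWithinAt_Iic (Ioo_subset_Ioc_self hx)).union
    (h.hasDerivWithinAt_Ici (Ioo_subset_Ico_self hx))
  rw [Iic_union_Ici, hasDerivWithinAt_univ] at this
  exact this.differentiableAt

theorem continuousOn (h : IsGeodesicGraphOn a p q f) : ContinuousOn f (Icc p q) := by
  intro x hx
  rcases hx.1.eq_or_lt with rfl | hpx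
  · rcases hx.2.eq_or_lt with rfl | hxq
    · simp only [Icc_self, continuousWithinAt_singleton]
    · exact (h.hasDerivWithinAt_Ici ⟨le_rfl, hxq⟩).continuousWithinAt.mono Icc_subset_Ici_self
  · rcases hx.2.eq_or_lt with rfl | hxq
    · exact (h.hasDerivWithinAt_Iic ⟨hpx, le_rfl⟩).continuousWithinAt.mono Icc_subset_Iic_self
    · exact (h.differentiableAt ⟨hpx, hxq⟩).continuousAt.continuousWithinAt

theorem not_isLocalMin (h : IsGeodesicGraphOn a p q f) (hx : x ∈ Ioo p q) : ¬IsLocalMin f x := by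
  intro hmin
  have h0 : deriv f x = 0 := hmin.deriv_eq_zero
  have hxI : x ∈ Icc p q := Ioo_subset_Icc_self hx
  have hdd : deriv (deriv f) x < 0 :=
    h.deriv_deriv_neg hxI (h.angleRate_neg_of_coeff_mul_deriv_nonpos hxI (by rw [h0, mul_zero]))
  have hmax := isLocalMax_of_deriv_deriv_neg hdd h0 (h.differentiableAt hx).continuousAt
  have hconst : f =ᶠ[𝓝 x] fun _ => f x := by
    filter_upwards [hmin, hmax] with r hr hr' using hr'.antisymm hr
  simp [hconst.deriv.deriv_eq] at hdd

/-! ### Propagation of concavity -/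

theorem eventually_angleRate_neg (h : IsGeodesicGraphOn a p q f) (hr : r ∈ Ioo p q)
    (hu : angleRate a f r < 0) : ∀ᶠ t in 𝓝 r, angleRate a f t < 0 := by
  have ha : ContinuousAt a r := h.continuousOn_coeff.continuousAt (Icc_mem_nhds hr.1 hr.2)
  have hd := (h.differentiableAt_deriv (Ioo_subset_Icc_self hr) hu.ne).continuousAt
  have hc : ContinuousAt (angleRate a f) r :=
    (ha.mul hd).sub ((h.differentiableAt hr).continuousAt.div_const 2)
  exact hc.eventually_lt_const hu

theorem strictAntiOn_deriv (h : IsGeodesicGraphOn a p q f) {S : Set ℝ} (hS : Convex ℝ S)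
    (hSI : S ⊆ Icc p q) (hu : ∀ r ∈ S, angleRate a f r < 0) : StrictAntiOn (deriv f) S :=
  strictAntiOn_of_deriv_neg hS
    (fun r hr => (h.differentiableAt_deriv (hSI hr) (hu r hr).ne).continuousAt.continuousWithinAt)
    fun r hr => h.deriv_deriv_neg (hSI (interior_subset hr)) (hu r (interior_subset hr))

theorem hasDerivAt_slopeExcess (h : IsGeodesicGraphOn a p q f) (hr : r ∈ Ioo p q)
    (ha : DifferentiableAt ℝ a r) (ha0 : a r ≠ 0) (hu : angleRate a f r ≠ 0) :
    HasDerivAt (slopeExcess a f) (deriv (deriv f) r -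
      (deriv f r * (2 * a r) - f r * (2 * deriv a r)) / (2 * a r) ^ 2) r :=
  (h.differentiableAt_deriv (Ioo_subset_Icc_self hr) hu).hasDerivAt.sub
    ((h.differentiableAt hr).hasDerivAt.div (ha.hasDerivAt.const_mul 2)
      (mul_ne_zero two_ne_zero ha0))

theorem deriv_deriv_le_deriv_slopeExcess (h : IsGeodesicGraphOn a p q f) (hr : r ∈ Ioo p q)
    (ha0 : a r ≠ 0) (ha' : 1 / 2 ≤ deriv a r) (hu : angleRate a f r < 0) :
    deriv (deriv f) r ≤ deriv (slopeExcess a f) r := by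
  have ha : DifferentiableAt ℝ a r := differentiableAt_of_deriv_ne_zero (by linarith)
  rw [(h.hasDerivAt_slopeExcess hr ha ha0 hu.ne).deriv, le_sub_self_iff]
  refine div_nonpos_of_nonpos_of_nonneg ?_ (sq_nonneg _)
  have hf := mul_nonneg (h.pos r (Ioo_subset_Icc_self hr)).le (sub_nonneg.2 ha')
  unfold angleRate at hu
  linarith

theorem continuousOn_div_coeff (h : IsGeodesicGraphOn a p q f) (ha : ∀ r ∈ Ioo p q, a r < 0) :
    ContinuousOn (fun r => f r / (2 * a r)) (Ioo p q) :=
  (h.continuousOn.mono Ioo_subset_Icc_self).div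
    (continuousOn_const.mul (h.continuousOn_coeff.mono Ioo_subset_Icc_self))
    fun r hr => mul_ne_zero two_ne_zero (ha r hr).ne

theorem exists_abs_deriv_le (h : IsGeodesicGraphOn a p q f) (hs : p < s) (hc : c < q)
    (ha : ∀ r ∈ Ioo p q, a r < 0) (hu : ∀ r ∈ Ico s c, angleRate a f r < 0) :
    ∃ M, ∀ t ∈ Ico s c, |deriv f t| ≤ M := by
  have hI : Icc s c ⊆ Ioo p q := Icc_subset_Ioo hs hc
  have hanti : AntitoneOn (deriv f) (Ico s c) := (h.strictAntiOn_deriv (convex_Ico s c)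
    (Ico_subset_Icc_self.trans (hI.trans Ioo_subset_Icc_self)) hu).antitoneOn
  obtain ⟨B, hB⟩ :=
    isCompact_Icc.exists_bound_of_continuousOn ((h.continuousOn_div_coeff ha).mono hI)
  refine ⟨max B |deriv f s|, fun t ht => abs_le'.2 ⟨?_, ?_⟩⟩
  · exact (hanti ⟨le_rfl, ht.1.trans_lt ht.2⟩ ht ht.1).trans
      ((le_abs_self _).trans (le_max_right _ _))
  · have htI : t ∈ Icc s c := Ico_subset_Icc_self ht
    have hexc := slopeExcess_pos (ha t (hI htI)) (hu t ht)
    unfold slopeExcess at hexc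
    linarith [neg_le_of_abs_le (hB t htI), le_max_left B |deriv f s|]

theorem exists_neg_mul_slopeExcess_le_deriv (h : IsGeodesicGraphOn a p q f) (hs : p < s)
    (hc : c < q) (ha : ∀ r ∈ Ioo p q, a r < 0) (ha' : ∀ r ∈ Ioo p q, 1 / 2 ≤ deriv a r)
    (hu : ∀ r ∈ Ico s c, angleRate a f r < 0) :
    ∃ K, ∀ t ∈ Ico s c, -(K * slopeExcess a f t) ≤ deriv (slopeExcess a f) t := by
  have hI : Icc s c ⊆ Ioo p q := Icc_subset_Ioo hs hc
  obtain ⟨M, hM⟩ := h.exists_abs_deriv_le hs hc ha hu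
  obtain ⟨B, hB⟩ := isCompact_Icc.exists_bound_of_continuousOn
    (h.continuousOn_coeff.mono (hI.trans Ioo_subset_Icc_self))
  refine ⟨(1 + M ^ 2) * B, fun t ht => ?_⟩
  have htI : t ∈ Ioo p q := hI (Ico_subset_Icc_self ht)
  have hK : (1 + deriv f t ^ 2) * -a t ≤ (1 + M ^ 2) * B :=
    mul_le_mul (by linarith [sq_le_sq.2 ((hM t ht).trans (le_abs_self M))])
      ((neg_le_abs _).trans (hB t (Ico_subset_Icc_self ht))) (neg_nonneg.2 (ha t htI).le)
      (by positivity)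
  calc -((1 + M ^ 2) * B * slopeExcess a f t)
      ≤ -((1 + deriv f t ^ 2) * -a t * slopeExcess a f t) :=
        neg_le_neg (mul_le_mul_of_nonneg_right hK (slopeExcess_pos (ha t htI) (hu t ht)).le)
    _ = deriv (deriv f) t := by
        rw [h.deriv_deriv_eq (Ioo_subset_Icc_self htI), angleRate_eq_mul_slopeExcess (ha t htI).ne]
        ring
    _ ≤ deriv (slopeExcess a f) t :=
        h.deriv_deriv_le_deriv_slopeExcess htI (ha t htI).ne (ha' t htI) (hu t ht)

theorem angleRate_neg_of_forall_Ico (h : IsGeodesicGraphOn a p q f) (hs : p < s) (hsc : s < c)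
    (hc : c < q) (ha : ∀ r ∈ Ioo p q, a r < 0) (ha' : ∀ r ∈ Ioo p q, 1 / 2 ≤ deriv a r)
    (hu : ∀ r ∈ Ico s c, angleRate a f r < 0) : angleRate a f c < 0 := by
  have hI : Icc s c ⊆ Ioo p q := Icc_subset_Ioo hs hc
  have hcI : c ∈ Ioo p q := hI (right_mem_Icc.2 hsc.le)
  obtain ⟨K, hK⟩ := h.exists_neg_mul_slopeExcess_le_deriv hs hc ha ha' hu
  have hdiff : ∀ t ∈ Ico s c, DifferentiableAt ℝ (slopeExcess a f) t := fun t ht => by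
    have htI : t ∈ Ioo p q := hI (Ico_subset_Icc_self ht)
    exact (h.hasDerivAt_slopeExcess htI
      (differentiableAt_of_deriv_ne_zero (by linarith [ha' t htI])) (ha t htI).ne
      (hu t ht).ne).differentiableAt
  set barrier : ℝ → ℝ := fun t => slopeExcess a f s * exp (-(K * (t - s)))
  have hle : f c / (2 * a c) + barrier c ≤ deriv f c := by
    refine le_deriv_of_eventually_le_deriv_nhdsLT (g := fun t => f t / (2 * a t) + barrier t)
      (h.differentiableAt hcI) ?_ ?_ ?_
    · filter_upwards [Ico_mem_nhdsLT hsc] with t ht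
      exact h.differentiableAt (hI (Ico_subset_Icc_self ht))
    · have hbarrier : ContinuousAt barrier c := by fun_prop
      exact (((h.continuousOn_div_coeff ha).continuousAt (Ioo_mem_nhds hcI.1 hcI.2)).add
        hbarrier).continuousWithinAt
    · filter_upwards [Ico_mem_nhdsLT hsc] with t ht
      exact le_sub_iff_add_le'.1 (mul_exp_le_of_neg_mul_le_deriv hdiff hK ht)
  have hpos : 0 < barrier c :=
    mul_pos (slopeExcess_pos (ha s (hI (left_mem_Icc.2 hsc.le))) (hu s ⟨le_rfl, hsc⟩)) (exp_pos _)
  rw [angleRate_eq_mul_slopeExcess (ha c hcI).ne]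
  refine mul_neg_of_neg_of_pos (ha c hcI) ?_
  unfold slopeExcess
  linarith

theorem angleRate_neg_of_le (h : IsGeodesicGraphOn a p q f) (ha : ∀ r ∈ Ioo p q, a r < 0)
    (ha' : ∀ r ∈ Ioo p q, 1 / 2 ≤ deriv a r) (hs : p < s) (hsr : s ≤ r) (hr : r < q)
    (hu : angleRate a f s < 0) : angleRate a f r < 0 := by
  by_contra hur
  have hopen : IsOpen {t ∈ Ioo p q | angleRate a f t < 0} := isOpen_iff_mem_nhds.2 fun t ht =>
    inter_mem (Ioo_mem_nhds ht.1.1 ht.1.2) (h.eventually_angleRate_neg ht.1 ht.2)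
  obtain ⟨c, hc, hcmin⟩ := (isCompact_Icc.diff hopen).exists_isLeast
    ⟨r, right_mem_Icc.2 hsr, fun hrV => hur hrV.2⟩
  have hcq : c < q := hc.1.2.trans_lt hr
  have hbefore : ∀ t ∈ Ico s c, angleRate a f t < 0 := fun t ht => by
    by_contra hut
    exact absurd (hcmin ⟨⟨ht.1, ht.2.le.trans hc.1.2⟩, fun htV => hut htV.2⟩) ht.2.not_ge
  have huc : angleRate a f c < 0 := by
    rcases hc.1.1.eq_or_lt with rfl | hsc
    exacts [hu, h.angleRate_neg_of_forall_Ico hs hsc hcq ha ha' hbefore]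
  exact hc.2 ⟨⟨hs.trans_le hc.1.1, hcq⟩, huc⟩

theorem angleRate_neg_of_lt (h : IsGeodesicGraphOn a p q f) (ha : ∀ r ∈ Ioo p q, a r < 0)
    (ha' : ∀ r ∈ Ioo p q, 1 / 2 ≤ deriv a r) (hm : m ∈ Ioc p q) (hpm : f p < f m)
    (hr : r ∈ Ioo p q) : angleRate a f r < 0 := by
  by_contra hur
  have hderiv : ∀ t ∈ Ioo p r, deriv f t < 0 := fun t ht => by
    have htq : t < q := ht.2.trans hr.2
    by_contra! hdt
    exact hur (h.angleRate_neg_of_le ha ha' ht.1 ht.2.le hr.2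
      (h.angleRate_neg_of_coeff_mul_deriv_nonpos ⟨ht.1.le, htq.le⟩
        (mul_nonpos_of_nonpos_of_nonneg (ha t ⟨ht.1, htq⟩).le hdt)))
  have hanti : StrictAntiOn f (Icc p r) :=
    strictAntiOn_of_deriv_neg (convex_Icc p r) (h.continuousOn.mono (Icc_subset_Icc_right hr.2.le))
      (by rwa [interior_Icc])
  have hpr : f r < f p := hanti (left_mem_Icc.2 hr.1.le) (right_mem_Icc.2 hr.1.le) hr.1
  have hrm : r < m := by
    by_contra! hmr
    exact hpm.not_ge (hanti (left_mem_Icc.2 hr.1.le) ⟨hm.1.le, hmr⟩ hm.1).le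
  obtain ⟨x, hx, hmin⟩ := isCompact_Icc.exists_isLocalMin_mem_open Ioo_subset_Icc_self
    (h.continuousOn.mono (Icc_subset_Icc_right hm.2)) (z := r) ⟨hr.1.le, hrm.le⟩
    (by
      rw [Icc_sdiff_Ioo_same hm.1.le]
      rintro z (rfl | rfl)
      exacts [hpr, hpr.trans hpm])
    isOpen_Ioo
  exact h.not_isLocalMin ⟨hx.1, hx.2.trans_le hm.2⟩ hmin

theorem concaveOn (h : IsGeodesicGraphOn a p q f) (ha : ∀ r ∈ Ioo p q, a r < 0)
    (ha' : ∀ r ∈ Ioo p q, 1 / 2 ≤ deriv a r) (hm : m ∈ Ioc p q) (hpm : f p < f m) :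
    ConcaveOn ℝ (Icc p q) f := by
  refine AntitoneOn.concaveOn_of_deriv (convex_Icc p q) h.continuousOn ?_ ?_ <;> rw [interior_Icc]
  · exact fun r hr => (h.differentiableAt hr).differentiableWithinAt
  · exact (h.strictAntiOn_deriv (convex_Ioo p q) Ioo_subset_Icc_self
      fun r hr => h.angleRate_neg_of_lt ha ha' hm hpm hr).antitoneOn

/-! ### A priori bounds -/

theorem le_max_left_endpoint (h : IsGeodesicGraphOn a p q f) (hpq : p < q)
    (ha : ∀ r ∈ Ioo p q, a r < 0) (ha' : ∀ r ∈ Ioo p q, 1 / 2 ≤ deriv a r)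
    (hA : ∫ t in p..q, f t ≤ A) (hr : r ∈ Icc p q) : f r ≤ max (f p) (2 * A / (q - p)) := by
  rw [le_max_iff, or_iff_not_imp_left, not_le]
  intro hpr
  have hconc := h.concaveOn ha ha' ⟨hr.1.lt_of_ne (by rintro rfl; exact hpr.false), hr.2⟩ hpr
  have harea := triangle_le_integral_of_concaveOn hconc h.continuousOn hr
    (h.pos p (left_mem_Icc.2 hpq.le)).le (h.pos q (right_mem_Icc.2 hpq.le)).le
  rw [le_div_iff₀ (sub_pos.2 hpq)]
  linarith

theorem le_max_right_endpoint (h : IsGeodesicGraphOn a p q f) (hpq : p < q)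
    (ha : ∀ r ∈ Ioo p q, 0 < a r) (ha' : ∀ r ∈ Ioo p q, 1 / 2 ≤ deriv a r)
    (hA : ∫ t in p..q, f t ≤ A) (hr : r ∈ Icc p q) : f r ≤ max (f q) (2 * A / (q - p)) := by
  have hmem : ∀ t ∈ Ioo (-q) (-p), -t ∈ Ioo p q := fun t ht =>
    ⟨lt_neg_of_lt_neg ht.2, neg_lt_of_neg_lt ht.1⟩
  have hbound := h.comp_neg.le_max_left_endpoint (neg_lt_neg hpq) (r := -r) (A := A)
    (fun t ht => neg_neg_of_pos (ha _ (hmem t ht)))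
    (fun t ht => by
      rw [deriv.fun_neg, deriv_comp_neg, neg_neg]
      exact ha' _ (hmem t ht))
    (by rwa [intervalIntegral.integral_comp_neg, neg_neg, neg_neg])
    ⟨neg_le_neg hr.2, neg_le_neg hr.1⟩
  simpa only [neg_neg, neg_sub_neg] using hbound

end IsGeodesicGraphOn

/-- The coefficient `r/2 - k/r` of `f'` in the graphical geodesic equation, where `k = λ - 1`. -/
noncomputable def geodesicCoeff (k r : ℝ) : ℝ :=
  r / 2 - k / r

section GeodesicCoeff

variable {k r : ℝ}

theorem hasDerivAt_geodesicCoeff (hr : r ≠ 0) :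
    HasDerivAt (geodesicCoeff k) (1 / 2 + k / r ^ 2) r :=
  (((hasDerivAt_id' r).div_const 2).sub
    ((hasDerivAt_const r k).div (hasDerivAt_id' r) hr)).congr_deriv (by ring)

theorem half_le_deriv_geodesicCoeff (hk : 0 ≤ k) (hr : r ≠ 0) :
    1 / 2 ≤ deriv (geodesicCoeff k) r := by
  rw [(hasDerivAt_geodesicCoeff hr).deriv]
  exact le_add_of_nonneg_right (by positivity)

theorem geodesicCoeff_eq_div (hr : r ≠ 0) : geodesicCoeff k r = (r ^ 2 - 2 * k) / (2 * r) := by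
  unfold geodesicCoeff
  field_simp

theorem geodesicCoeff_neg (hr : 0 < r) (hrk : r < √(2 * k)) : geodesicCoeff k r < 0 := by
  rw [geodesicCoeff_eq_div hr.ne']
  exact div_neg_of_neg_of_pos (sub_neg.2 ((lt_sqrt hr.le).1 hrk)) (by positivity)

theorem geodesicCoeff_pos (hr : 0 < r) (hrk : √(2 * k) < r) : 0 < geodesicCoeff k r := by
  rw [geodesicCoeff_eq_div hr.ne']
  exact div_pos (sub_pos.2 ((sqrt_lt' hr).1 hrk)) (by positivity)

end GeodesicCoeff

/-- A priori bounds for a positive solution of the graphical geodesic equation on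
`[ε₀, R₀]` whose Gauss area under the graph is at most `π`. -/
theorem solution_bounds (lam : ℝ) (hlam : 1 < lam) (ε₀ R₀ : ℝ)
    (hε : 0 < ε₀) (h1 : ε₀ < Real.sqrt (2 * (lam - 1)))
    (h2 : Real.sqrt (2 * (lam - 1)) < R₀)
    (f : ℝ → ℝ)
    (hpos : ∀ r ∈ Set.Icc ε₀ R₀, 0 < f r)
    (heq : ∀ r ∈ Set.Icc ε₀ R₀,
      deriv (deriv f) r / (1 + (deriv f r) ^ 2)
        = (r / 2 - (lam - 1) / r) * deriv f r - f r / 2)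
    (harea : (∫ r in ε₀..R₀, f r * (1 + (lam - 1) / r ^ 2)) ≤ π) :
    (∀ r ∈ Set.Icc ε₀ (Real.sqrt (2 * (lam - 1))),
      f r ≤ max (f ε₀) (2 * π / (Real.sqrt (2 * (lam - 1)) - ε₀))) ∧
    (∀ r ∈ Set.Icc (Real.sqrt (2 * (lam - 1))) R₀,
      f r ≤ max (f R₀) (2 * π / (R₀ - Real.sqrt (2 * (lam - 1))))) := by
  have hk : 0 ≤ lam - 1 := by linarith
  have hr0 : ∀ r ∈ Icc ε₀ R₀, r ≠ 0 := fun r hr => (hε.trans_le hr.1).ne'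
  have hcoeff : ContinuousOn (geodesicCoeff (lam - 1)) (Icc ε₀ R₀) := fun r hr =>
    (hasDerivAt_geodesicCoeff (hr0 r hr)).continuousAt.continuousWithinAt
  have h : IsGeodesicGraphOn (geodesicCoeff (lam - 1)) ε₀ R₀ f := ⟨hcoeff, hpos, heq⟩
  have hweight : ContinuousOn (fun r => 1 + (lam - 1) / r ^ 2) (Icc ε₀ R₀) :=
    continuousOn_const.add (continuousOn_const.div (by fun_prop)
      fun r hr => pow_ne_zero 2 (hr0 r hr))
  have hA : ∀ c d, ε₀ ≤ c → c ≤ d → d ≤ R₀ → ∫ r in c..d, f r ≤ π := fun c d hc hcd hd =>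
    (integral_le_integral_mul_of_one_le hc hcd hd h.continuousOn hweight
      (fun r hr => (hpos r hr).le)
      fun r _ => le_add_of_nonneg_right (by positivity)).trans harea
  constructor <;> intro r hr
  · exact (h.mono le_rfl h2.le).le_max_left_endpoint h1
      (fun t ht => geodesicCoeff_neg (hε.trans ht.1) ht.2)
      (fun t ht => half_le_deriv_geodesicCoeff hk (hε.trans ht.1).ne')
      (hA _ _ le_rfl h1.le h2.le) hr
  · exact (h.mono h1.le le_rfl).le_max_right_endpoint h2
      (fun t ht => geodesicCoeff_pos ((hε.trans h1).trans ht.1) ht.1)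
      (fun t ht => half_le_deriv_geodesicCoeff hk ((hε.trans h1).trans ht.1).ne')
      (hA _ _ h1.le h2.le le_rfl) hr
end
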